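/- arXiv:math/0311041 — 2 statements merged into one kernel-verified Lean document; each statement's English description precedes it below -/
import Mathlib

section
/- If X is a C-maximal set of vertices of a directed graph G, then every class C of C(X) with |C| ≠ 2 is a homogeneous set: either all ordered pairs of distinct vertices of C are edges, or none is. -/
/-- For vertices `u, v ∉ X` of a digraph, `u ≡_X v` iff `u` and `v` have identical
in- and out-adjacencies to every vertex of `X`. -/
def Digraph.EqOn {V : Type*} (E : V → V → Prop) (X : Set V) (u v : V) : Prop :=
  ∀ x ∈ X, (E u x ↔ E v x) ∧ (E x u ↔ E x v)

/-- The `≡_X`-class of a vertex `u ∉ X`. -/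
def Digraph.classOf {V : Type*} (E : V → V → Prop) (X : Set V) (u : V) : Set V :=
  {v | v ∉ X ∧ Digraph.EqOn E X u v}

/-- The partition `C(X)` of the complement of `X` into `≡_X`-classes. -/
def Digraph.classes {V : Type*} (E : V → V → Prop) (X : Set V) : Set (Set V) :=
  {S | ∃ u, u ∉ X ∧ S = Digraph.classOf E X u}

/-- `X` is `C`-maximal if adding a single vertex never increases the number of classes. -/
def Digraph.CMaximal {V : Type*} (E : V → V → Prop) (X : Set V) : Prop :=
  ∀ u ∉ X, (Digraph.classes E (X ∪ {u})).ncard ≤ (Digraph.classes E X).ncard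

theorem aux_key {V : Type*} [Fintype V]
    (E : V → V → Prop) (X : Set V)
    (hX : Digraph.CMaximal E X) (a b c : V) (ha : a ∉ X) (hb : b ∉ X) (hc : c ∉ X)
    (hab : Digraph.EqOn E X a b) (hac : Digraph.EqOn E X a c) (hba : b ≠ a) (hca : c ≠ a) :
    (E b a ↔ E c a) ∧ (E a b ↔ E a c) := by
  let f : Set V → Set V := fun S => {v | v ∉ X ∧ ∃ s ∈ S, Digraph.EqOn E X s v}
  have symm : ∀ {s t : V}, Digraph.EqOn E X s t → Digraph.EqOn E X t s :=
    fun h x hx => ⟨(h x hx).1.symm, (h x hx).2.symm⟩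
  have trans : ∀ {s t r : V}, Digraph.EqOn E X s t → Digraph.EqOn E X t r →
      Digraph.EqOn E X s r :=
    fun h k x hx => ⟨(h x hx).1.trans (k x hx).1, (h x hx).2.trans (k x hx).2⟩
  have cls : ∀ {s t : V}, Digraph.EqOn E X s t →
      Digraph.classOf E X s = Digraph.classOf E X t := by
    intro s t h
    ext v
    exact ⟨fun k => ⟨k.1, trans (symm h) k.2⟩, fun k => ⟨k.1, trans h k.2⟩⟩
  have self : ∀ (Y : Set V) (w : V), w ∉ Y → w ∈ Digraph.classOf E Y w :=
    fun Y w hw => ⟨hw, fun x _ => ⟨Iff.rfl, Iff.rfl⟩⟩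
  have hf : ∀ w, w ∉ X ∪ {a} →
      f (Digraph.classOf E (X ∪ {a}) w) = Digraph.classOf E X w := by
    intro w hw
    ext v
    constructor
    · rintro ⟨hv, s, hs, hsv⟩
      exact ⟨hv, trans (fun x hx => hs.2 x (Or.inl hx)) hsv⟩
    · rintro ⟨hv, h⟩
      exact ⟨hv, w, self _ _ hw, h⟩
  have hb' : b ∉ X ∪ {a} := by
    rintro (h | h)
    exacts [hb h, hba h]
  have hc' : c ∉ X ∪ {a} := by
    rintro (h | h)
    exacts [hc h, hca h]
  have him : f '' Digraph.classes E (X ∪ {a}) = Digraph.classes E X := by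
    ext S
    constructor
    · rintro ⟨T, ⟨w, hw, rfl⟩, rfl⟩
      exact ⟨w, fun h => hw (Or.inl h), hf w hw⟩
    · rintro ⟨w, hw, rfl⟩
      by_cases hwa : w = a
      · subst hwa
        exact ⟨_, ⟨b, hb', rfl⟩, (hf b hb').trans (cls hab).symm⟩
      · have hw' : w ∉ X ∪ {a} := by
          rintro (h | h)
          exacts [hw h, hwa h]
        exact ⟨_, ⟨w, hw', rfl⟩, hf w hw'⟩
  have hle := hX a ha
  have hinj : Set.InjOn f (Digraph.classes E (X ∪ {a})) := by
    apply Set.injOn_of_ncard_image_eq _ (Set.toFinite _)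
    apply le_antisymm (Set.ncard_image_le (Set.toFinite _))
    rw [him]
    exact hle
  have heq : Digraph.classOf E (X ∪ {a}) b = Digraph.classOf E (X ∪ {a}) c := by
    apply hinj ⟨b, hb', rfl⟩ ⟨c, hc', rfl⟩
    rw [hf b hb', hf c hc', ← cls hab, ← cls hac]
  have hcm := self _ _ hc'
  rw [← heq] at hcm
  exact hcm.2 a (Or.inr rfl)

/-- If `X` is a `C`-maximal vertex set of a loopless digraph, then every class `C` of
`C(X)` with `|C| ≠ 2` is homogeneous: either all ordered pairs of distinct vertices of
`C` are edges, or none is. -/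
theorem digraph_classOf_homogeneous_of_cMaximal {V : Type*} [Fintype V]
    (E : V → V → Prop) (hloopless : ∀ v, ¬ E v v) (X : Set V)
    (hX : Digraph.CMaximal E X) (u : V) (hu : u ∉ X)
    (hcard : (Digraph.classOf E X u).ncard ≠ 2) :
    (∀ a ∈ Digraph.classOf E X u, ∀ b ∈ Digraph.classOf E X u, a ≠ b → E a b) ∨
      (∀ a ∈ Digraph.classOf E X u, ∀ b ∈ Digraph.classOf E X u, ¬ E a b) := by
  have K : ∀ a ∈ Digraph.classOf E X u, ∀ b ∈ Digraph.classOf E X u,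
      ∀ c ∈ Digraph.classOf E X u, b ≠ a → c ≠ a →
      (E b a ↔ E c a) ∧ (E a b ↔ E a c) := by
    intro a ha b hb c hc hba hca
    refine aux_key E X hX a b c ha.1 hb.1 hc.1 ?_ ?_ hba hca
    · exact fun x hx => ⟨(ha.2 x hx).1.symm.trans (hb.2 x hx).1,
        (ha.2 x hx).2.symm.trans (hb.2 x hx).2⟩
    · exact fun x hx => ⟨(ha.2 x hx).1.symm.trans (hc.2 x hx).1,
        (ha.2 x hx).2.symm.trans (hc.2 x hx).2⟩
  generalize Digraph.classOf E X u = C at *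
  by_cases h2 : ∀ a ∈ C, ∀ b ∈ C, ¬ E a b
  · exact Or.inr h2
  left
  push Not at h2
  obtain ⟨p, hp, q, hq, hpq⟩ := h2
  have hne : p ≠ q := by
    rintro rfl
    exact hloopless _ hpq
  obtain ⟨r, hr, hrp, hrq⟩ : ∃ r ∈ C, r ≠ p ∧ r ≠ q := by
    by_contra hcon
    push Not at hcon
    apply hcard
    have : C = {p, q} := by
      ext v
      constructor
      · intro hv
        by_cases hvp : v = p
        · exact Or.inl hvp
        · exact Or.inr (hcon v hv hvp)
      · rintro (rfl | rfl) <;> assumption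
    rw [this]
    exact Set.ncard_pair hne
  have h1 : ∀ a ∈ C, ∀ b ∈ C, a ≠ b → b ≠ p → E a b := by
    intro a ha b hb hab hbp
    have : E p b := (K p hp q hq b hb hne.symm hbp).2.1 hpq
    exact (K b hb p hp a ha hbp.symm hab).1.1 this
  intro a ha b hb hab
  by_cases hbp : b = p
  · subst hbp
    by_cases haq : a = q
    · subst haq
      exact (K a ha r hr b hb hrq hne).2.1 (h1 a ha r hr hrq.symm hrp)
    · exact (K a ha q hq b hb (Ne.symm haq) hab.symm).2.1 (h1 a ha q hq haq hne.symm)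
  · exact h1 a ha b hb hab hbp
end

section
/- For a graph G of order n, if its maximum similarity class [v] satisfies σ(G) = |[v]| ≥ n/2 and [v] is an independent set, then [v] is an inclusion-maximal independent set if and only if |[v]| equals the independence number α(G). -/
/-- Vertices `u` and `v` of a graph are *similar* if the transposition `(u v)`
is an automorphism of the graph. -/
def SimpleGraph.IsSim {V : Type*} [DecidableEq V] (G : SimpleGraph V) (u v : V) : Prop :=
  ∀ x y : V, G.Adj x y ↔ G.Adj (Equiv.swap u v x) (Equiv.swap u v y)

/-- Let `[v]` be a largest similarity class of a graph `G` of order `n`, and suppose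
`[v]` is independent with `|[v]| ≥ n/2`.  Then `[v]` is an inclusion-maximal
independent set iff `|[v]| = α(G)`, i.e. iff every independent set has at most `|[v]|`
vertices. -/
theorem simClass_maximal_iff_card_eq_indepNumber {V : Type*} [Fintype V] [DecidableEq V]
    (G : SimpleGraph V) (v : V)
    (hmaxclass : ∀ u : V, ({w | G.IsSim u w}).ncard ≤ ({w | G.IsSim v w}).ncard)
    (hhalf : Fintype.card V ≤ 2 * ({w | G.IsSim v w}).ncard)
    (hind : ({w | G.IsSim v w}).Pairwise fun a b => ¬ G.Adj a b) :
    ((∀ S : Set V, (S.Pairwise fun a b => ¬ G.Adj a b) → {w | G.IsSim v w} ⊆ S →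
        S = {w | G.IsSim v w}) ↔
      (∀ S : Set V, (S.Pairwise fun a b => ¬ G.Adj a b) →
        S.ncard ≤ ({w | G.IsSim v w}).ncard)) := by
  set C : Set V := {w | G.IsSim v w} with hC
  have hvC : v ∈ C := by
    intro x y
    simp
  have key : ∀ s, s ∉ C → ∀ w ∈ C, (G.Adj s v ↔ G.Adj s w) := by
    intro s hs w hw
    have h := hw s v
    have h1 : s ≠ v := fun h => hs (h ▸ hvC)
    have h2 : s ≠ w := fun h => hs (h ▸ hw)
    rwa [Equiv.swap_apply_of_ne_of_ne h1 h2, Equiv.swap_apply_left] at h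
  constructor
  · intro hmax S hS
    by_contra! hlt
    by_cases hd : Disjoint S C
    · have h1 := Set.ncard_union_eq hd (Set.toFinite _) (Set.toFinite _)
      have h2 : (S ∪ C).ncard ≤ Fintype.card V := by
        rw [← Nat.card_eq_fintype_card, ← Set.ncard_univ]
        exact Set.ncard_le_ncard (Set.subset_univ _) (Set.toFinite _)
      omega
    · obtain ⟨c, hcS, hcC⟩ := Set.not_disjoint_iff.mp hd
      have cross : ∀ s ∈ S, s ∉ C → ∀ w ∈ C, ¬ G.Adj s w := by
        intro s hsS hsC w hw
        rw [← key s hsC w hw, key s hsC c hcC]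
        exact hS hsS hcS (fun h => hsC (h ▸ hcC))
      have hU := hmax (S ∪ C) (by
        intro a ha b hb hab
        by_cases haC : a ∈ C
        · by_cases hbC : b ∈ C
          · exact hind haC hbC hab
          · exact fun h => cross b (hb.resolve_right hbC) hbC a haC h.symm
        · by_cases hbC : b ∈ C
          · exact cross a (ha.resolve_right haC) haC b hbC
          · exact hS (ha.resolve_right haC) (hb.resolve_right hbC) hab) Set.subset_union_right
      have h3 : S ⊆ C := fun x hx => hU ▸ Or.inl hx
      have := Set.ncard_le_ncard h3 (Set.toFinite _)
      omega
  · intro h S hS hCS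
    exact (Set.eq_of_subset_of_ncard_le hCS (h S hS) (Set.toFinite _)).symm
end
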